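/- Let m, p ≥ 1, let F ∈ M_m(ℂ) be positive semidefinite Hermitian, let G ∈ M_p(ℂ) be positive semidefinite Hermitian, let P ∈ M_m(ℂ) ⊗ M_p(ℂ) ≅ M_{mp}(ℂ) be an orthogonal projection (P = P^* = P²), let B ∈ M_{mp}(ℂ) be arbitrary, and let e ∈ M_m(ℂ) have rank at most one. Then |Tr( (F ⊗ G) · P B P · (e ⊗ I_p) )| ≤ Tr(G) · ‖B‖ · ‖eF‖, where ⊗ is the Kronecker product and ‖·‖ the operator norm. (This is the matrix content of Lemma 7.6 of the paper, where F ⊗ G = F_n ⊗ F_{t-n}, P = P_t^+, and the conclusion reads |qtr_t(B ψ_{n,t}(e))| ≤ (dim_q(t-n)/dim_q(t)) ‖B‖ ‖eF_n‖.) -/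

import Mathlib

open scoped ComplexOrder

open Kronecker

/-- The operator norm of a complex matrix acting on `ℓ²`. -/
noncomputable def matOpNorm {n : Type*} [Fintype n] [DecidableEq n]
    (F : Matrix n n ℂ) : ℝ :=
  ‖Matrix.toEuclideanCLM (𝕜 := ℂ) F‖

/-- Euclidean norm of a function. -/
noncomputable def eNrm {n : Type*} [Fintype n] (x : n → ℂ) : ℝ := ‖WithLp.toLp 2 x‖

theorem eNrm_sq {n : Type*} [Fintype n] (x : n → ℂ) : eNrm x ^ 2 = ∑ i, ‖x i‖ ^ 2 := by
  unfold eNrm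
  rw [EuclideanSpace.norm_sq_eq]

theorem eNrm_nonneg {n : Type*} [Fintype n] (x : n → ℂ) : 0 ≤ eNrm x := norm_nonneg _

theorem eNrm_prod {n k : Type*} [Fintype n] [Fintype k] (x : n → ℂ) (y : k → ℂ) :
    eNrm (fun q : n × k => x q.1 * y q.2) = eNrm x * eNrm y := by
  have h := eNrm_nonneg x
  have h' := eNrm_nonneg y
  rw [← sq_eq_sq₀ (eNrm_nonneg _) (by positivity), mul_pow, eNrm_sq, eNrm_sq, eNrm_sq,
    Finset.sum_mul_sum, Fintype.sum_prod_type]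
  simp [mul_pow]

theorem eNrm_star {n : Type*} [Fintype n] (x : n → ℂ) : eNrm (star x) = eNrm x := by
  rw [← sq_eq_sq₀ (eNrm_nonneg _) (eNrm_nonneg _), eNrm_sq, eNrm_sq]
  simp

theorem form_bound {n : Type*} [Fintype n] [DecidableEq n] (C : Matrix n n ℂ) (x y : n → ℂ) :
    ‖(C.mulVec x) ⬝ᵥ star y‖ ≤ matOpNorm C * eNrm x * eNrm y := by
  have h1 := norm_inner_le_norm (𝕜 := ℂ) (WithLp.toLp 2 y) (WithLp.toLp 2 (C.mulVec x))
  rw [EuclideanSpace.inner_toLp_toLp] at h1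
  have h2 := (Matrix.toEuclideanCLM (𝕜 := ℂ) C).le_opNorm (WithLp.toLp 2 x)
  rw [Matrix.toEuclideanCLM_toLp] at h2
  unfold matOpNorm eNrm
  calc _ ≤ _ := h1
    _ ≤ ‖WithLp.toLp 2 y‖ * (‖Matrix.toEuclideanCLM (𝕜 := ℂ) C‖ * ‖WithLp.toLp 2 x‖) := by gcongr
    _ = _ := by ring

theorem proj_norm_le {n : Type*} [Fintype n] [DecidableEq n] (P B : Matrix n n ℂ)
    (hP : P.IsHermitian) (hP2 : P * P = P) : matOpNorm (P * B * P) ≤ matOpNorm B := by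
  unfold matOpNorm
  set Q := Matrix.toEuclideanCLM (𝕜 := ℂ) P with hQ
  have h1 : IsStarProjection Q := by
    refine ⟨?_, ?_⟩
    · change Q * Q = Q
      rw [hQ, ← map_mul, hP2]
    · change star Q = Q
      rw [hQ, ← map_star, Matrix.star_eq_conjTranspose, hP.eq]
  have h2 : ‖Q‖ ≤ 1 := IsStarProjection.norm_le Q h1
  rw [map_mul, map_mul]
  set T := Matrix.toEuclideanCLM (𝕜 := ℂ) B
  calc ‖Q * T * Q‖ ≤ ‖Q‖ * ‖T‖ * ‖Q‖ := by
        refine (norm_mul_le _ _).trans ?_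
        gcongr
        exact norm_mul_le _ _
    _ ≤ 1 * ‖T‖ * 1 := by gcongr
    _ = ‖T‖ := by ring

theorem rank_one_exists {m : ℕ} (e : Matrix (Fin m) (Fin m) ℂ) (he : e.rank ≤ 1) :
    ∃ u v : Fin m → ℂ, e = Matrix.vecMulVec u v := by
  unfold Matrix.rank at he
  rw [finrank_le_one_iff] at he
  obtain ⟨u, hu⟩ := he
  choose c hc using fun j => hu ⟨e.mulVecLin (Pi.single j 1), LinearMap.mem_range_self _ _⟩
  refine ⟨u, c, ?_⟩
  ext i j
  have := congrFun (congrArg Subtype.val (hc j)) i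
  simp at this
  simp [Matrix.vecMulVec_apply, ← this, mul_comm]

theorem vec_norm_le {m : ℕ} (u v : Fin m → ℂ) :
    eNrm u * eNrm v ≤ matOpNorm (Matrix.vecMulVec u v) := by
  have h2 := (Matrix.toEuclideanCLM (𝕜 := ℂ) (Matrix.vecMulVec u v)).le_opNorm
    (WithLp.toLp 2 (star v))
  rw [Matrix.toEuclideanCLM_toLp] at h2
  change eNrm _ ≤ matOpNorm _ * eNrm _ at h2
  have h3 : (Matrix.vecMulVec u v).mulVec (star v) = ((eNrm v ^ 2 : ℝ) : ℂ) • u := by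
    ext i
    rw [eNrm_sq]
    simp only [Matrix.mulVec, dotProduct, Matrix.vecMulVec_apply, Pi.smul_apply, smul_eq_mul,
      Complex.ofReal_sum, Finset.sum_mul, Pi.star_apply]
    refine Finset.sum_congr rfl fun j _ => ?_
    have := Complex.mul_conj' (v j)
    push_cast
    rw [← this]
    simp only [RCLike.star_def]
    ring
  have h4 : eNrm (((eNrm v ^ 2 : ℝ) : ℂ) • u) = eNrm v ^ 2 * eNrm u := by
    unfold eNrm
    rw [WithLp.toLp_smul, norm_smul, Complex.norm_real, Real.norm_of_nonneg (by positivity)]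
  rw [h3, h4, eNrm_star] at h2
  rcases (eNrm_nonneg v).eq_or_lt with h | h
  · rw [← h, mul_zero]
    exact norm_nonneg _
  · refine le_of_mul_le_mul_right ?_ h
    linarith

theorem trace_kron_proj_bound (m p : ℕ) (hm : 1 ≤ m) (hp : 1 ≤ p)
    (F : Matrix (Fin m) (Fin m) ℂ) (hF : F.PosSemidef)
    (G : Matrix (Fin p) (Fin p) ℂ) (hG : G.PosSemidef)
    (P B : Matrix (Fin m × Fin p) (Fin m × Fin p) ℂ)
    (hP : P.IsHermitian) (hP2 : P * P = P)
    (e : Matrix (Fin m) (Fin m) ℂ) (he : e.rank ≤ 1) :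
    ‖((F ⊗ₖ G) * (P * B * P) * (e ⊗ₖ (1 : Matrix (Fin p) (Fin p) ℂ))).trace‖
      ≤ (G.trace).re * matOpNorm B * matOpNorm (e * F) := by
  obtain ⟨u, v, huv⟩ := rank_one_exists (e * F) ((Matrix.rank_mul_le_left e F).trans he)
  obtain ⟨r, A, hA⟩ := Matrix.posSemidef_iff_eq_sum_vecMulVec.mp hG
  have hC := proj_norm_le P B hP hP2
  set C := P * B * P
  rw [Matrix.trace_mul_comm, ← Matrix.mul_assoc, ← Matrix.mul_kronecker_mul, Matrix.one_mul, huv]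
  have hn := vec_norm_le u v
  have htr : (G.trace).re = ∑ k, eNrm (A k) ^ 2 := by
    rw [hA, Matrix.trace_sum, Complex.re_sum]
    refine Finset.sum_congr rfl fun k _ => ?_
    rw [eNrm_sq, Matrix.trace, Complex.re_sum]
    refine Finset.sum_congr rfl fun i _ => ?_
    simp [Matrix.vecMulVec_apply, Complex.mul_conj, Complex.normSq_eq_norm_sq, ← Complex.ofReal_pow]
  have key : ((Matrix.vecMulVec u v ⊗ₖ G) * C).trace =
      ∑ k, (C.mulVec (fun q => u q.1 * A k q.2)) ⬝ᵥ
        star (fun q : Fin m × Fin p => star v q.1 * A k q.2) := by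
    rw [Matrix.trace_mul_comm]
    have hk : Matrix.vecMulVec u v ⊗ₖ G = ∑ k, Matrix.vecMulVec
        (fun q : Fin m × Fin p => u q.1 * A k q.2)
        (star (fun q : Fin m × Fin p => star v q.1 * A k q.2)) := by
      ext ⟨i, a⟩ ⟨j, b⟩
      rw [hA]
      simp only [Matrix.kroneckerMap_apply, Matrix.sum_apply, Matrix.vecMulVec_apply,
        Finset.mul_sum]
      refine Finset.sum_congr rfl fun k _ => ?_
      simp
      ring
    rw [hk, Finset.mul_sum, Matrix.trace_sum]
    refine Finset.sum_congr rfl fun k _ => ?_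
    rw [Matrix.mul_vecMulVec, Matrix.trace_vecMulVec]
  rw [key, htr]
  have hu := eNrm_nonneg u
  have hv := eNrm_nonneg v
  have hB : 0 ≤ matOpNorm B := norm_nonneg _
  calc _ ≤ ∑ k, eNrm (A k) ^ 2 * matOpNorm B * matOpNorm (Matrix.vecMulVec u v) := by
        refine (norm_sum_le _ _).trans (Finset.sum_le_sum fun k _ => ?_)
        refine (form_bound _ _ _).trans ?_
        rw [eNrm_prod, eNrm_prod, eNrm_star]
        have hk := eNrm_nonneg (A k)
        calc _ = eNrm (A k) ^ 2 * matOpNorm C * (eNrm u * eNrm v) := by ring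
          _ ≤ _ := by gcongr
    _ = _ := by rw [Finset.sum_mul, Finset.sum_mul]
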